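/- In the gluing setup, for every x, y ∈ V_p we have d̂(x,y) = p̂(x,y). -/

import Mathlib

open scoped Classical

universe u

namespace GraphMetricPaper

variable {X : Type u}

/-- The vertex set `V = ⋃ E` of a graph given by an adjacency relation `E`. -/
def Vtx (E : X → X → Prop) : Set X := {x | ∃ y, E x y}

/-- Two points are joined by a walk in the graph `E`. -/
def Joined (E : X → X → Prop) (x y : X) : Prop :=
  ∃ (n : ℕ) (c : ℕ → X), c 0 = x ∧ c n = y ∧ ∀ i, i < n → E (c i) (c (i + 1))

/-- The set of weights of walks from `x` to `y`. -/
def walkSums (E : X → X → Prop) (d : X → X → ℝ) (x y : X) : Set ℝ :=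
  {s | ∃ (n : ℕ) (c : ℕ → X), c 0 = x ∧ c n = y ∧ (∀ i, i < n → E (c i) (c (i + 1))) ∧
    s = ∑ i ∈ Finset.range n, d (c i) (c (i + 1))}

/-- The shortest-path pseudometric `d̂` determined by a weight function `d` on a graph `E`. -/
noncomputable def hatd (E : X → X → Prop) (d : X → X → ℝ) (x y : X) : ℝ :=
  sInf (walkSums E d x y)

/-- The function `ď` bounding the possible extensions of `d` from below:
`ď(x,y) = sup_{ab ∈ E} max {0, d(ab) - d̂(a,x) - d̂(y,b)}`. -/
noncomputable def checkd (E : X → X → Prop) (d : X → X → ℝ) (x y : X) : ℝ :=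
  sSup ({0} ∪ {r | ∃ a b, E a b ∧ r = d a b - hatd E d a x - hatd E d y b})

/-- The pseudometric `d̈` on doubletons:
`d̈(xy,uv) = min {d̂(x,u) + d̂(y,v), d̂(x,v) + d̂(y,u)}`. -/
noncomputable def ddot (E : X → X → Prop) (d : X → X → ℝ) (x y u v : X) : ℝ :=
  min (hatd E d x u + hatd E d y v) (hatd E d x v + hatd E d y u)

/-- `d` is a graph pseudometric with edge relation `E`:  `E` is a (symmetric, irreflexive)
connected graph, `d` is a nonnegative symmetric weight on the edges, and `d = d̂` on edges. -/
structure IsGraphPseudometric (E : X → X → Prop) (d : X → X → ℝ) : Prop where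
  symm : ∀ ⦃a b⦄, E a b → E b a
  irrefl : ∀ a, ¬ E a a
  wt_symm : ∀ ⦃a b⦄, E a b → d a b = d b a
  nonneg : ∀ ⦃a b⦄, E a b → 0 ≤ d a b
  connected : ∀ x ∈ Vtx E, ∀ y ∈ Vtx E, Joined E x y
  edge_eq : ∀ ⦃a b⦄, E a b → d a b = hatd E d a b

/-- A graph metric is a graph pseudometric with strictly positive weights. -/
def IsGraphMetric (E : X → X → Prop) (d : X → X → ℝ) : Prop :=
  IsGraphPseudometric E d ∧ ∀ ⦃a b⦄, E a b → 0 < d a b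

/-- A floppy graph pseudometric: `ď(x,y) < d̂(x,y)` for every `xy ∈ [V]² \ E`. -/
def FloppyPseudometric (E : X → X → Prop) (d : X → X → ℝ) : Prop :=
  IsGraphPseudometric E d ∧
    ∀ x ∈ Vtx E, ∀ y ∈ Vtx E, x ≠ y → ¬ E x y → checkd E d x y < hatd E d x y

/-- A floppy graph metric: `ď(x,y) < d̂(x,y)` for every `xy ∈ [V]² \ E`. -/
def FloppyMetric (E : X → X → Prop) (d : X → X → ℝ) : Prop :=
  IsGraphMetric E d ∧
    ∀ x ∈ Vtx E, ∀ y ∈ Vtx E, x ≠ y → ¬ E x y → checkd E d x y < hatd E d x y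

/-- The edge relation of the one-step extension `E ∪ {xy}`. -/
def extEdge (E : X → X → Prop) (x y : X) : X → X → Prop :=
  fun a b => E a b ∨ (a = x ∧ b = y) ∨ (a = y ∧ b = x)

/-- The weight function of the one-step extension `d ∪ {⟨xy, r⟩}`. -/
noncomputable def extWt (d : X → X → ℝ) (x y : X) (r : ℝ) : X → X → ℝ :=
  fun a b => if (a = x ∧ b = y) ∨ (a = y ∧ b = x) then r else d a b

/-- The set `[V]² \ E` of unordered pairs of distinct vertices that are not edges. -/
def nonEdgePairs (E : X → X → Prop) : Set (Sym2 X) :=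
  {e | ∃ a b : X, e = s(a, b) ∧ a ≠ b ∧ a ∈ Vtx E ∧ b ∈ Vtx E ∧ ¬ E a b}

/-- A set of (unordered) weighted pairs, presented as a relation `R`, is a full metric
on `V`: it is symmetric, its domain is exactly `[V]²`, it is single-valued, positive,
and satisfies the triangle inequality. -/
def IsFullMetricRel (V : Set X) (R : X → X → ℝ → Prop) : Prop :=
  (∀ a b r, R a b r → R b a r) ∧
  (∀ a b r, R a b r → a ∈ V ∧ b ∈ V ∧ a ≠ b) ∧
  (∀ a b, a ∈ V → b ∈ V → a ≠ b → ∃ r, R a b r) ∧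
  (∀ a b r s, R a b r → R a b s → r = s) ∧
  (∀ a b r, R a b r → 0 < r) ∧
  (∀ a b c r s t, R a b r → R b c s → R a c t → t ≤ r + s)

/-- A weight function `D` on `[V]²` is a full metric on `V`. -/
def IsFullMetricOn (V : Set X) (D : X → X → ℝ) : Prop :=
  (∀ a b, a ∈ V → b ∈ V → a ≠ b → D a b = D b a) ∧
  (∀ a b, a ∈ V → b ∈ V → a ≠ b → 0 < D a b) ∧
  (∀ a b c, a ∈ V → b ∈ V → c ∈ V → a ≠ b → b ≠ c → a ≠ c → D a c ≤ D a b + D b c)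

/-- Player I has a winning strategy in the metric-extending game `Game_d(lam, Fam)`:
there are functions `S1, S2` choosing, for each inning `β < lam` and each sequence of
previous answers of player II, a legal doubleton in `[V]²` and a set from `Fam`, such that
for every play of player II respecting the strategy, the resulting relation
`d ∪ {⟨x_α y_α, r_α⟩ : α < lam}` is a full metric on `V`. -/
def WinningStratI (V : Set X) (E : X → X → Prop) (d : X → X → ℝ)
    (lam : Ordinal.{u}) (Fam : Set (Set ℝ)) : Prop :=
  ∃ (S1 : ∀ β : Ordinal.{u}, β < lam → (∀ α : Ordinal.{u}, α < β → ℝ) → X × X)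
    (S2 : ∀ β : Ordinal.{u}, β < lam → (∀ α : Ordinal.{u}, α < β → ℝ) → Set ℝ),
    (∀ β hβ s, S2 β hβ s ∈ Fam) ∧
    (∀ β hβ s, (S1 β hβ s).1 ∈ V ∧ (S1 β hβ s).2 ∈ V ∧ (S1 β hβ s).1 ≠ (S1 β hβ s).2) ∧
    (∀ s : ∀ α : Ordinal.{u}, α < lam → ℝ,
      (∀ α (hα : α < lam), s α hα ∈ S2 α hα (fun γ hγ => s γ (hγ.trans hα))) →
      IsFullMetricRel V (fun a b r =>
        (E a b ∧ r = d a b) ∨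
        ∃ α, ∃ hα : α < lam,
          ((a = (S1 α hα (fun γ hγ => s γ (hγ.trans hα))).1 ∧
            b = (S1 α hα (fun γ hγ => s γ (hγ.trans hα))).2) ∨
           (a = (S1 α hα (fun γ hγ => s γ (hγ.trans hα))).2 ∧
            b = (S1 α hα (fun γ hγ => s γ (hγ.trans hα))).1)) ∧
          r = s α hα))

/-- Player II has a winning strategy in the metric-extending game `Game_d(lam, Fam)`:
there is a function `T` assigning to each inning `β < lam` and each sequence of moves of
player I (of length `β + 1`) an answer in the set component of the last move, such that
for every legal play of player I, the resulting relation is not a full metric on `V`. -/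
def WinningStratII (V : Set X) (E : X → X → Prop) (d : X → X → ℝ)
    (lam : Ordinal.{u}) (Fam : Set (Set ℝ)) : Prop :=
  ∃ T : ∀ β : Ordinal.{u}, β < lam → (∀ α : Ordinal.{u}, α ≤ β → (X × X) × Set ℝ) → ℝ,
    (∀ β hβ p, (p β le_rfl).2 ∈ Fam → T β hβ p ∈ (p β le_rfl).2) ∧
    (∀ p : ∀ α : Ordinal.{u}, α < lam → (X × X) × Set ℝ,
      (∀ α hα, (p α hα).1.1 ∈ V ∧ (p α hα).1.2 ∈ V ∧ (p α hα).1.1 ≠ (p α hα).1.2 ∧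
        (p α hα).2 ∈ Fam) →
      ¬ IsFullMetricRel V (fun a b r =>
        (E a b ∧ r = d a b) ∨
        ∃ α, ∃ hα : α < lam,
          ((a = (p α hα).1.1 ∧ b = (p α hα).1.2) ∨
           (a = (p α hα).1.2 ∧ b = (p α hα).1.1)) ∧
          r = T α hα (fun γ hγ => p γ (lt_of_le_of_lt hγ hα))))

/-- The edge relation of the glued graph `E_d = E_p ∪ ⋃_{f ∈ F} E_f`. -/
def gluedEdge (Ep : X → X → Prop) (F : Set ((X → X → Prop) × (X → X → ℝ))) :
    X → X → Prop :=
  fun a b => Ep a b ∨ ∃ f ∈ F, f.1 a b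

/-- `Λ(v; B) = inf {d̂(a,v) + d̂(v,b) - d̂(a,b) : a, b ∈ B}`. -/
noncomputable def Lam (E : X → X → Prop) (d : X → X → ℝ) (v : X) (B : Set X) : ℝ :=
  sInf {r | ∃ a ∈ B, ∃ b ∈ B, r = hatd E d a v + hatd E d v b - hatd E d a b}

/-- The gluing setup: a graph pseudometric `p = (Ep, wp)` and a family `F` of graph
pseudometrics such that each member meets `V_p`, agrees with `p̂` on the intersection of
the vertex sets, and distinct members only meet inside `V_p`; `wd` is the glued weight
function `d = p ∪ ⋃ F` on `E_d = E_p ∪ ⋃_{f ∈ F} E_f`. -/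
structure GluingSetup (Ep : X → X → Prop) (wp : X → X → ℝ)
    (F : Set ((X → X → Prop) × (X → X → ℝ))) (wd : X → X → ℝ) : Prop where
  hp : IsGraphPseudometric Ep wp
  hF : ∀ f ∈ F, IsGraphPseudometric f.1 f.2
  meet : ∀ f ∈ F, (Vtx f.1 ∩ Vtx Ep).Nonempty
  agree : ∀ f ∈ F, ∀ x ∈ Vtx f.1 ∩ Vtx Ep, ∀ y ∈ Vtx f.1 ∩ Vtx Ep, x ≠ y →
    hatd f.1 f.2 x y = hatd Ep wp x y
  inter_sub : ∀ f ∈ F, ∀ g ∈ F, f ≠ g → Vtx f.1 ∩ Vtx g.1 ⊆ Vtx Ep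
  wd_p : ∀ ⦃a b⦄, Ep a b → wd a b = wp a b
  wd_F : ∀ f ∈ F, ∀ ⦃a b⦄, f.1 a b → wd a b = f.2 a b

/-! Consider a walk in the glued graph between vertices `x, y` of `V_p`. Each of its excursions
outside `V_p` stays inside a single member of the family, because two members meet only inside
`V_p`; and a walk inside one member between two vertices of `V_p` weighs at least their
`p̂`-distance, so it may be traded for a jump along `p̂`. Reading the walk backwards from `y` and
trading the excursions one after another, the triangle inequality for `p̂` shows that the walk
weighs at least `p̂(x,y)`. -/

section Walks

variable {E : X → X → Prop} {d : X → X → ℝ} {x y z : X} {s t : ℝ}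

theorem zero_mem_walkSums (E : X → X → Prop) (d : X → X → ℝ) (x : X) : 0 ∈ walkSums E d x x :=
  ⟨0, fun _ => x, rfl, rfl, by simp, by simp⟩

theorem add_mem_walkSums_of_edge (hxy : E x y) (hs : s ∈ walkSums E d y z) :
    d x y + s ∈ walkSums E d x z := by
  obtain ⟨n, c, rfl, rfl, hc, rfl⟩ := hs
  refine ⟨n + 1, fun i => i.casesOn x c, rfl, rfl, fun i hi => ?_, ?_⟩
  · cases i with
    | zero => exact hxy
    | succ i => exact hc i (Nat.lt_of_succ_lt_succ hi)
  · rw [add_comm, Finset.sum_range_succ']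
    rfl

theorem weight_mem_walkSums (d : X → X → ℝ) (hxy : E x y) : d x y ∈ walkSums E d x y := by
  simpa using add_mem_walkSums_of_edge hxy (zero_mem_walkSums E d y)

theorem walkSums_induction {P : X → ℝ → Prop} (nil : P y 0)
    (cons : ∀ ⦃v w s⦄, E v w → P w s → P v (d v w + s)) (hs : s ∈ walkSums E d x y) : P x s := by
  obtain ⟨n, c, rfl, rfl, hc, rfl⟩ := hs
  induction n generalizing c with
  | zero => simpa using nil
  | succ n ih =>
    rw [Finset.sum_range_succ', add_comm]
    exact cons (hc 0 n.succ_pos) (ih (fun i => c (i + 1)) nil fun i hi => hc (i + 1) (by lia))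

theorem add_mem_walkSums (hs : s ∈ walkSums E d x y) (ht : t ∈ walkSums E d y z) :
    s + t ∈ walkSums E d x z := by
  refine walkSums_induction (P := fun v r => r + t ∈ walkSums E d v z) (by simpa using ht) ?_ hs
  intro v w r hvw hr
  rw [add_assoc]
  exact add_mem_walkSums_of_edge hvw hr

theorem Joined.walkSums_nonempty (h : Joined E x y) (d : X → X → ℝ) :
    (walkSums E d x y).Nonempty :=
  let ⟨n, c, hx, hy, hc⟩ := h
  ⟨_, n, c, hx, hy, hc, rfl⟩

theorem walkSums_mono {E' : X → X → Prop} {d' : X → X → ℝ} (hE : ∀ ⦃a b⦄, E a b → E' a b)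
    (hd : ∀ ⦃a b⦄, E a b → d' a b = d a b) (x y : X) :
    walkSums E d x y ⊆ walkSums E' d' x y := by
  rintro _ ⟨n, c, hx, hy, hc, rfl⟩
  exact ⟨n, c, hx, hy, fun i hi => hE (hc i hi),
    Finset.sum_congr rfl fun i hi => (hd (hc i (Finset.mem_range.1 hi))).symm⟩

variable (hd : ∀ ⦃a b⦄, E a b → 0 ≤ d a b)
include hd

theorem nonneg_of_mem_walkSums (hs : s ∈ walkSums E d x y) : 0 ≤ s :=
  walkSums_induction (P := fun _ r => 0 ≤ r) le_rfl
    (fun _ _ _ hvw hr => add_nonneg (hd hvw) hr) hs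

theorem bddBelow_walkSums (x y : X) : BddBelow (walkSums E d x y) :=
  ⟨0, fun _ hs => nonneg_of_mem_walkSums hd hs⟩

theorem hatd_le_of_mem_walkSums (hs : s ∈ walkSums E d x y) : hatd E d x y ≤ s :=
  csInf_le (bddBelow_walkSums hd x y) hs

theorem hatd_self (x : X) : hatd E d x x = 0 :=
  le_antisymm (hatd_le_of_mem_walkSums hd (zero_mem_walkSums E d x))
    (Real.sInf_nonneg fun _ hs => nonneg_of_mem_walkSums hd hs)

open scoped Pointwise in
theorem hatd_triangle (hxy : Joined E x y) (hyz : Joined E y z) :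
    hatd E d x z ≤ hatd E d x y + hatd E d y z := by
  have hxy := hxy.walkSums_nonempty d
  have hyz := hyz.walkSums_nonempty d
  calc hatd E d x z ≤ sInf (walkSums E d x y + walkSums E d y z) :=
        csInf_le_csInf (bddBelow_walkSums hd x z) (hxy.add hyz)
          (Set.add_subset_iff.2 fun _ hs _ ht => add_mem_walkSums hs ht)
    _ = hatd E d x y + hatd E d y z :=
        csInf_add hxy (bddBelow_walkSums hd x y) hyz (bddBelow_walkSums hd y z)

end Walks

section Gluing

variable {Ep : X → X → Prop} {wp : X → X → ℝ} {F : Set ((X → X → Prop) × (X → X → ℝ))}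
  {wd : X → X → ℝ} {v w y : X} {s : ℝ}

/-- A gluing of a family `F` of weighted graphs along a connected, nonnegatively weighted graph
`p = (Ep, wp)`, in which walks in a member of `F` are no shortcuts for `p̂`; it generalizes
`GluingSetup`. The walks are bounded one by one because `f̂`, an infimum in `ℝ`, has the junk value
`0` where `f` is disconnected or its walks are unbounded below. -/
structure ShortcutFreeGluing (Ep : X → X → Prop) (wp : X → X → ℝ)
    (F : Set ((X → X → Prop) × (X → X → ℝ))) (wd : X → X → ℝ) : Prop where
  symm_p : ∀ ⦃a b⦄, Ep a b → Ep b a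
  nonneg_p : ∀ ⦃a b⦄, Ep a b → 0 ≤ wp a b
  connected_p : ∀ x ∈ Vtx Ep, ∀ y ∈ Vtx Ep, Joined Ep x y
  symm_F : ∀ f ∈ F, ∀ ⦃a b⦄, f.1 a b → f.1 b a
  hatd_mem_lowerBounds : ∀ f ∈ F, ∀ x ∈ Vtx f.1 ∩ Vtx Ep, ∀ y ∈ Vtx f.1 ∩ Vtx Ep,
    hatd Ep wp x y ∈ lowerBounds (walkSums f.1 f.2 x y)
  inter_sub : ∀ f ∈ F, ∀ g ∈ F, f ≠ g → Vtx f.1 ∩ Vtx g.1 ⊆ Vtx Ep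
  wd_p : ∀ ⦃a b⦄, Ep a b → wd a b = wp a b
  wd_F : ∀ f ∈ F, ∀ ⦃a b⦄, f.1 a b → wd a b = f.2 a b

theorem GluingSetup.shortcutFreeGluing (hs : GluingSetup Ep wp F wd) :
    ShortcutFreeGluing Ep wp F wd where
  symm_p := hs.hp.symm
  nonneg_p := hs.hp.nonneg
  connected_p := hs.hp.connected
  symm_F f hf := (hs.hF f hf).symm
  hatd_mem_lowerBounds f hf x hx y hy t ht := by
    have hnonneg := (hs.hF f hf).nonneg
    rcases eq_or_ne x y with rfl | hxy
    · exact (hatd_self hs.hp.nonneg x).trans_le (nonneg_of_mem_walkSums hnonneg ht)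
    · exact (hs.agree f hf x hx y hy hxy).ge.trans (hatd_le_of_mem_walkSums hnonneg ht)
  inter_sub := hs.inter_sub
  wd_p := hs.wd_p
  wd_F := hs.wd_F

/-- The budget `s` pays for travelling from `v` to `y` at the price `p̂` inside `V_p`, preceded,
for each member of the family that contains `v`, by a walk in that member from `v` to `V_p`.
This is the invariant of glued walks that end at `y ∈ V_p`. -/
structure CostBound (Ep : X → X → Prop) (wp : X → X → ℝ)
    (F : Set ((X → X → Prop) × (X → X → ℝ))) (y v : X) (s : ℝ) : Prop where
  hatd_le : v ∈ Vtx Ep → hatd Ep wp v y ≤ s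
  exists_walk : ∀ f ∈ F, v ∈ Vtx f.1 →
    ∃ z ∈ Vtx f.1 ∩ Vtx Ep, ∃ t ∈ walkSums f.1 f.2 v z, t + hatd Ep wp z y ≤ s

theorem CostBound.of_mem (hv : v ∈ Vtx Ep) (h : hatd Ep wp v y ≤ s) :
    CostBound Ep wp F y v s :=
  ⟨fun _ => h, fun f _ hvf => ⟨v, ⟨hvf, hv⟩, 0, zero_mem_walkSums f.1 f.2 v, by rwa [zero_add]⟩⟩

namespace ShortcutFreeGluing

variable (hs : ShortcutFreeGluing Ep wp F wd)
include hs

theorem hatd_triangle {x z : X} (hx : x ∈ Vtx Ep) (hy : y ∈ Vtx Ep) (hz : z ∈ Vtx Ep) :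
    hatd Ep wp x z ≤ hatd Ep wp x y + hatd Ep wp y z :=
  GraphMetricPaper.hatd_triangle hs.nonneg_p (hs.connected_p x hx y hy) (hs.connected_p y hy z hz)

theorem costBound_of_edge_p (hy : y ∈ Vtx Ep) (hvw : Ep v w) (h : CostBound Ep wp F y w s) :
    CostBound Ep wp F y v (wd v w + s) := by
  have hv : v ∈ Vtx Ep := ⟨w, hvw⟩
  have hw : w ∈ Vtx Ep := ⟨v, hs.symm_p hvw⟩
  refine .of_mem hv ?_
  calc hatd Ep wp v y ≤ hatd Ep wp v w + hatd Ep wp w y := hs.hatd_triangle hv hw hy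
    _ ≤ wp v w + s := add_le_add
        (hatd_le_of_mem_walkSums hs.nonneg_p (weight_mem_walkSums wp hvw)) (h.hatd_le hw)
    _ = wd v w + s := by rw [hs.wd_p hvw]

theorem costBound_of_walk (hy : y ∈ Vtx Ep) {f : (X → X → Prop) × (X → X → ℝ)} (hf : f ∈ F)
    (hv : v ∈ Vtx f.1) {z : X} (hz : z ∈ Vtx f.1 ∩ Vtx Ep) {t : ℝ}
    (ht : t ∈ walkSums f.1 f.2 v z) (hts : t + hatd Ep wp z y ≤ s) :
    CostBound Ep wp F y v s := by
  by_cases hvp : v ∈ Vtx Ep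
  · refine .of_mem hvp ?_
    calc hatd Ep wp v y ≤ hatd Ep wp v z + hatd Ep wp z y := hs.hatd_triangle hvp hz.2 hy
      _ ≤ t + hatd Ep wp z y := by
          gcongr
          exact hs.hatd_mem_lowerBounds f hf v ⟨hv, hvp⟩ z hz ht
      _ ≤ s := hts
  · refine ⟨fun h => absurd h hvp, fun g hg hvg => ?_⟩
    obtain rfl : f = g := by
      by_contra hfg
      exact hvp (hs.inter_sub f hf g hg hfg ⟨hv, hvg⟩)
    exact ⟨z, hz, t, ht, hts⟩

theorem costBound_of_edge_F (hy : y ∈ Vtx Ep) {f : (X → X → Prop) × (X → X → ℝ)} (hf : f ∈ F)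
    (hvw : f.1 v w) (h : CostBound Ep wp F y w s) : CostBound Ep wp F y v (wd v w + s) := by
  obtain ⟨z, hz, t, ht, hts⟩ := h.exists_walk f hf ⟨v, hs.symm_F f hf hvw⟩
  refine hs.costBound_of_walk hy hf ⟨w, hvw⟩ hz (add_mem_walkSums_of_edge hvw ht) ?_
  rw [hs.wd_F f hf hvw, add_assoc]
  gcongr

theorem costBound_of_mem_walkSums (hy : y ∈ Vtx Ep)
    (h : s ∈ walkSums (gluedEdge Ep F) wd v y) : CostBound Ep wp F y v s := by
  refine walkSums_induction (P := CostBound Ep wp F y)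
    (.of_mem hy (hatd_self hs.nonneg_p y).le) ?_ h
  rintro a b r (hab | ⟨f, hf, hab⟩) hb
  · exact hs.costBound_of_edge_p hy hab hb
  · exact hs.costBound_of_edge_F hy hf hab hb

end ShortcutFreeGluing

end Gluing

theorem gluing_hatd_on_p_general {Ep : X → X → Prop} {wp : X → X → ℝ}
    {F : Set ((X → X → Prop) × (X → X → ℝ))} {wd : X → X → ℝ}
    (hs : ShortcutFreeGluing Ep wp F wd) {x y : X} (hx : x ∈ Vtx Ep) (hy : y ∈ Vtx Ep) :
    hatd (gluedEdge Ep F) wd x y = hatd Ep wp x y := by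
  have hne : (walkSums Ep wp x y).Nonempty := (hs.connected_p x hx y hy).walkSums_nonempty wp
  have hsub : walkSums Ep wp x y ⊆ walkSums (gluedEdge Ep F) wd x y :=
    walkSums_mono (fun _ _ => Or.inl) hs.wd_p x y
  have hlower : hatd Ep wp x y ∈ lowerBounds (walkSums (gluedEdge Ep F) wd x y) :=
    fun _ h => (hs.costBound_of_mem_walkSums hy h).hatd_le hx
  exact le_antisymm (csInf_le_csInf ⟨_, hlower⟩ hne hsub) (le_csInf (hne.mono hsub) hlower)

/-- In the gluing setup, `d̂(x,y) = p̂(x,y)` for all `x, y ∈ V_p`. -/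
theorem gluing_hatd_on_p (Ep : X → X → Prop) (wp : X → X → ℝ)
    (F : Set ((X → X → Prop) × (X → X → ℝ))) (wd : X → X → ℝ)
    (hs : GluingSetup Ep wp F wd) :
    ∀ x ∈ Vtx Ep, ∀ y ∈ Vtx Ep,
      hatd (gluedEdge Ep F) wd x y = hatd Ep wp x y :=
  fun _ hx _ hy => gluing_hatd_on_p_general hs.shortcutFreeGluing hx hy

end GraphMetricPaper
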